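/- Let n ≥ 1. Let μ_n and μ_{2n} be the normalized Haar measures on 𝕋ⁿ and 𝕋²ⁿ respectively, and let {e_m : m ∈ ℤ²ⁿ} be the orthonormal basis of L²(𝕋²ⁿ, μ_{2n}) given by e_m(u) = conj(⟨u, m⟩). Let U be the unitary representation of 𝕋²ⁿ on L²(𝕋²ⁿ, μ_{2n}) with (U(u)φ)(v) = φ(v·conj(u)) (componentwise multiplication). Let M be a POVM on (𝕋ⁿ, ℬ(𝕋ⁿ)) acting on L²(𝕋²ⁿ, μ_{2n}) that is a covariant position difference observable: U(w, z) M(B) U(w, z)* = M(z·conj(w)·B) for all w, z ∈ 𝕋ⁿ and all Borel B ⊆ 𝕋ⁿ. Then there exists a family {ξ_{k,l} : (k,l) ∈ ℤⁿ × ℤⁿ} of unit vectors in ℓ²(ℕ) such that for all j, k, l ∈ ℤⁿ and Borel B ⊆ 𝕋ⁿ: ⟨e_{(j−k, k)}, M(B) e_{(j−l, l)}⟩ = ⟨ξ_{j−k, k}, ξ_{j−l, l}⟩ ∫_B ⟨z, k − l⟩ dμ_n(z), and ⟨e_{(a,b)}, M(B) e_{(c,d)}⟩ = 0 whenever a + b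 ≠ c + d. -/

import Mathlib

open MeasureTheory Set

local notation "⟪" x ", " y "⟫" => @inner ℂ _ _ x y

noncomputable instance : MeasurableSpace Circle := borel Circle
instance : BorelSpace Circle := ⟨rfl⟩

/-- A normalized positive operator valued measure (POVM). -/
structure POVM (Ω : Type*) [MeasurableSpace Ω] (H : Type*) [NormedAddCommGroup H]
    [InnerProductSpace ℂ H] [CompleteSpace H] where
  toFun : Set Ω → (H →L[ℂ] H)
  isPositive : ∀ B : Set Ω, MeasurableSet B → (toFun B).IsPositive
  normalized : toFun Set.univ = 1
  m_iUnion : ∀ B : ℕ → Set Ω, (∀ k, MeasurableSet (B k)) →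
    Pairwise (Function.onFun Disjoint B) → ∀ φ ψ : H,
      HasSum (fun k => ⟪φ, toFun (B k) ψ⟫) ⟪φ, toFun (⋃ k, B k) ψ⟫

/-- `ℓ²(ℕ)`. -/
noncomputable abbrev ell2 : Type := lp (fun _ : ℕ => ℂ) 2

/-- The character `⟨w, m⟩ = w₁^{m₁} ⋯ w_n^{m_n}` of the torus `𝕋ⁿ`. -/
noncomputable def torusChar {n : ℕ} (w : Fin n → Circle) (m : Fin n → ℤ) : ℂ :=
  ∏ i, (w i : ℂ) ^ (m i)

/-! Covariance says that translating `B` by `z` multiplies each matrix element `⟪e p, M(B) e q⟫`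
by a character `χ` of `z`. Undoing this twist and averaging over the Haar measure, Fubini's
theorem shows that `B ↦ ⟪e p, M(B) e q⟫` has density `K p q * χ` for a constant `K p q`. The
elements `(z, z)` translate every `B` to itself, which forces the matrix element to vanish unless
`p.1 + p.2 = q.1 + q.2`. Along such a diagonal, positivity of all `M(B)` passes to the matrix of
continuous densities at every point. At the identity of the torus all characters are `1`, so the
matrix `K` itself is positive semidefinite, hence a Gram matrix of vectors in a reproducing kernel
Hilbert space. This space is separable and embeds into `ℓ²(ℕ)`, and `M(𝕋ⁿ) = 1` makes the vectors
unit. -/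

open scoped ComplexOrder ComplexConjugate

section SquareSummable

variable {𝕜 : Type*} [RCLike 𝕜]

theorem countable_of_orthonormal {E : Type*} [NormedAddCommGroup E] [InnerProductSpace 𝕜 E]
    [TopologicalSpace.SeparableSpace E] {ι : Type*} {b : ι → E} (hb : Orthonormal 𝕜 b) :
    Countable ι := by
  have norm_sub : ∀ i j, i ≠ j → ‖b i - b j‖ ^ 2 = 2 := fun i j hij => by
    rw [@norm_sub_sq 𝕜, hb.1, hb.1, hb.2 hij, map_zero]
    norm_num
  have disjoint_balls : (univ : Set ι).PairwiseDisjoint fun i => Metric.ball (b i) (1 / 2) :=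
    fun i _ j _ hij => Metric.ball_disjoint_ball <| by
      rw [dist_eq_norm]
      nlinarith [norm_sub i j hij, norm_nonneg (b i - b j)]
  exact countable_univ_iff.1 <| disjoint_balls.countable_of_isOpen (fun _ _ => Metric.isOpen_ball)
    fun i _ => Metric.nonempty_ball.2 (by norm_num)

theorem nonempty_linearIsometry_ell2 (E : Type*) [NormedAddCommGroup E] [InnerProductSpace ℂ E]
    [CompleteSpace E] [TopologicalSpace.SeparableSpace E] : Nonempty (E →ₗᵢ[ℂ] ell2) := by
  obtain ⟨w, b, -⟩ := exists_hilbertBasis ℂ E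
  have : Countable w := countable_of_orthonormal b.orthonormal
  obtain ⟨f, hf⟩ := exists_injective_nat w
  have orthonormal_basis := (default : HilbertBasis ℕ ℂ ell2).orthonormal.comp f hf
  exact ⟨orthonormal_basis.orthogonalFamily.linearIsometry.comp b.repr.toLinearIsometry⟩

theorem separableSpace_of_rkhs (H X V : Type*) [Countable X] [NormedAddCommGroup V]
    [InnerProductSpace 𝕜 V] [CompleteSpace V] [TopologicalSpace.SeparableSpace V]
    [NormedAddCommGroup H] [InnerProductSpace 𝕜 H] [CompleteSpace H] [RKHS 𝕜 H X V] :
    TopologicalSpace.SeparableSpace H := by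
  have separable_kernels : TopologicalSpace.IsSeparable {RKHS.kerFun H x v | (x : X) (v : V)} := by
    have kernels_eq : {RKHS.kerFun H x v | (x : X) (v : V)} = ⋃ x, range (RKHS.kerFun H x) := by
      ext
      simp
    rw [kernels_eq]
    exact .iUnion fun x => TopologicalSpace.isSeparable_range (RKHS.kerFun H x).continuous
  have separable_closure := (separable_kernels.span (R := 𝕜)).closure
  rw [← Submodule.topologicalClosure_coe, RKHS.kerFun_dense, Submodule.top_coe] at separable_closure
  exact TopologicalSpace.isSeparable_univ_iff.1 separable_closure

theorem posSemidef_map_algebraMap_continuousLinearMap {ι : Type*} {A : Matrix ι ι ℂ}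
    (hA : A.PosSemidef) : (A.map (algebraMap ℂ (ℂ →L[ℂ] ℂ))).PosSemidef := by
  have posSemidef_iff := (RKHS.posSemidef_tfae (K := A.map (algebraMap ℂ (ℂ →L[ℂ] ℂ)))).out 0 2
  refine posSemidef_iff.2 ⟨hA.isHermitian.map _ algebraMap_star_comm, fun c => ?_⟩
  refine (Complex.nonneg_iff.1 (hA.2 c)).1.trans_eq (congrArg Complex.re ?_)
  refine Finsupp.sum_congr fun i _ => Finsupp.sum_congr fun j _ => ?_
  simp only [RCLike.star_def, ← hA.isHermitian.apply i j, Matrix.map_apply,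
    Algebra.algebraMap_eq_smul_one, smul_apply, one_apply_eq_self, smul_eq_mul,
    RCLike.inner_apply, map_mul]
  ring

theorem exists_ell2_inner_eq_of_posSemidef {ι : Type*} [Countable ι] {A : Matrix ι ι ℂ}
    (hA : A.PosSemidef) : ∃ η : ι → ell2, ∀ i j, ⟪η i, η j⟫ = A i j := by
  have : Fact (A.map (algebraMap ℂ (ℂ →L[ℂ] ℂ))).PosSemidef :=
    ⟨posSemidef_map_algebraMap_continuousLinearMap hA⟩
  let E := RKHS.OfKernel (A.map (algebraMap ℂ (ℂ →L[ℂ] ℂ)))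
  have : TopologicalSpace.SeparableSpace E := separableSpace_of_rkhs (𝕜 := ℂ) E ι ℂ
  obtain ⟨T⟩ := nonempty_linearIsometry_ell2 E
  refine ⟨fun i => T (RKHS.kerFun E i 1), fun i j => ?_⟩
  rw [T.inner_map_map, ← RKHS.kernel_inner, RKHS.OfKernel.kernel_ofKernel]
  simpa [Algebra.algebraMap_eq_smul_one] using hA.isHermitian.apply i j

end SquareSummable

theorem nonneg_of_forall_setIntegral_nonneg {X : Type*} [TopologicalSpace X] [MeasurableSpace X]
    {μ : Measure X} [μ.IsOpenPosMeasure] {f : X → ℂ} (hf : Continuous f) (hfμ : Integrable f μ)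
    (h : ∀ B, MeasurableSet B → 0 ≤ ∫ x in B, f x ∂μ) (x : X) : 0 ≤ f x := by
  have re_nonneg : 0 ≤ᵐ[μ] fun x => (f x).re :=
    ae_nonneg_of_forall_setIntegral_nonneg hfμ.re fun B hB _ =>
      (Complex.nonneg_iff.1 (h B hB)).1.trans_eq (integral_re hfμ.integrableOn).symm
  have im_eq_zero : (fun x => (f x).im) =ᵐ[μ] 0 :=
    hfμ.im.ae_eq_zero_of_forall_setIntegral_eq_zero fun B hB _ =>
      (integral_im hfμ.integrableOn).trans (Complex.nonneg_iff.1 (h B hB)).2.symm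
  have ae_nonneg : ∀ᵐ x ∂μ, f x ∈ Ici 0 := by
    filter_upwards [re_nonneg, im_eq_zero] with x hre him
    exact Complex.nonneg_iff.2 ⟨hre, him.symm⟩
  exact (isClosed_Ici.preimage hf).closure_subset (Measure.dense_of_ae ae_nonneg x)

namespace POVM

variable {Ω : Type*} [MeasurableSpace Ω] {H : Type*} [NormedAddCommGroup H]
  [InnerProductSpace ℂ H] [CompleteSpace H] (M : POVM Ω H)

theorem inner_empty (φ ψ : H) : ⟪φ, M.toFun ∅ ψ⟫ = 0 := by
  have h := M.m_iUnion (fun _ => ∅) (fun _ => .empty) (fun _ _ _ => disjoint_bot_left) φ ψ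
  exact (summable_const_iff _).1 h.summable

/-- The scalar measure `B ↦ ⟨φ, M(B)φ⟩` of a POVM `M` in the vector state `φ`, which makes measure
theory (here Fubini) applicable to `M`. The value is a nonnegative complex number, so passing to
its real part only serves to land in `[0, ∞]`. -/
noncomputable def diagMeasure (φ : H) : Measure Ω :=
  Measure.ofMeasurable (fun B _ => ENNReal.ofReal ⟪φ, M.toFun B φ⟫.re)
    (by simp [inner_empty]) fun B hB hdisj => by
      have hsum := Complex.hasSum_re (M.m_iUnion B hB hdisj φ φ)
      have re_nonneg (k : ℕ) : 0 ≤ ⟪φ, M.toFun (B k) φ⟫.re :=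
        (Complex.nonneg_iff.1 ((M.isPositive _ (hB k)).inner_nonneg_right φ)).1
      rw [← hsum.tsum_eq, ENNReal.ofReal_tsum_of_nonneg re_nonneg hsum.summable]

theorem diagMeasure_apply (φ : H) {B : Set Ω} (hB : MeasurableSet B) :
    M.diagMeasure φ B = ENNReal.ofReal ⟪φ, M.toFun B φ⟫.re :=
  Measure.ofMeasurable_apply B hB

instance (φ : H) : IsFiniteMeasure (M.diagMeasure φ) :=
  ⟨by rw [M.diagMeasure_apply φ .univ]; exact ENNReal.ofReal_lt_top⟩

theorem coe_diagMeasure_real (φ : H) {B : Set Ω} (hB : MeasurableSet B) :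
    ((M.diagMeasure φ).real B : ℂ) = ⟪φ, M.toFun B φ⟫ := by
  have inner_nonneg := (M.isPositive B hB).inner_nonneg_right φ
  rw [measureReal_def, M.diagMeasure_apply φ hB,
    ENNReal.toReal_ofReal (Complex.nonneg_iff.1 inner_nonneg).1]
  exact (Complex.eq_re_of_ofReal_le inner_nonneg).symm

theorem exists_inner_eq_sum_diagMeasure (x y : H) :
    ∃ (v : Fin 4 → H) (c : Fin 4 → ℂ), ∀ B, MeasurableSet B →
      ⟪x, M.toFun B y⟫ = ∑ i, c i * (M.diagMeasure (v i)).real B := by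
  refine ⟨![x + y, x - y, x + Complex.I • y, x - Complex.I • y],
    ![1 / 4, -1 / 4, -Complex.I / 4, Complex.I / 4], fun B hB => ?_⟩
  have symmetric : (M.toFun B : H →ₗ[ℂ] H).IsSymmetric := (M.isPositive B hB).isSymmetric
  have inner_self_eq (v : H) : ⟪(M.toFun B : H →ₗ[ℂ] H) v, v⟫ = (M.diagMeasure v).real B :=
    (symmetric v v).trans (M.coe_diagMeasure_real v hB).symm
  have polarization := inner_map_polarization' (M.toFun B : H →ₗ[ℂ] H) x y
  simp only [inner_self_eq] at polarization
  rw [← ContinuousLinearMap.coe_coe, ← symmetric x y, polarization, Fin.sum_univ_four]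
  simp only [Matrix.cons_val]
  ring

variable {M}

section ContinuousDensity

variable {μ : Measure Ω} {ι : Type*} {x : ι → H} {f : ι → ι → Ω → ℂ}

theorem inner_sum_smul_eq_setIntegral (hfμ : ∀ i j, Integrable (f i j) μ)
    (h : ∀ i j B, MeasurableSet B → ⟪x i, M.toFun B (x j)⟫ = ∫ z in B, f i j z ∂μ)
    (s : Finset ι) (c : ι → ℂ) {B : Set Ω} (hB : MeasurableSet B) :
    ⟪∑ i ∈ s, c i • x i, M.toFun B (∑ i ∈ s, c i • x i)⟫ =
      ∫ z in B, ∑ i ∈ s, ∑ j ∈ s, star (c i) * f i j z * c j ∂μ := by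
  have integrable (i j : ι) : IntegrableOn (fun z => star (c i) * f i j z * c j) B μ :=
    (((hfμ i j).const_mul _).mul_const _).integrableOn
  rw [map_sum, sum_inner, integral_finsetSum _ fun i _ => integrable_finsetSum _ fun j _ =>
    integrable i j]
  refine Finset.sum_congr rfl fun i _ => ?_
  rw [inner_sum, integral_finsetSum _ fun j _ => integrable i j]
  refine Finset.sum_congr rfl fun j _ => ?_
  rw [map_smul, inner_smul_left, inner_smul_right, h i j B hB, integral_mul_const,
    integral_const_mul, Complex.star_def]
  ring

variable [TopologicalSpace Ω] [μ.IsOpenPosMeasure]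

theorem posSemidef_of_continuous_density (hf : ∀ i j, Continuous (f i j))
    (hfμ : ∀ i j, Integrable (f i j) μ)
    (h : ∀ i j B, MeasurableSet B → ⟪x i, M.toFun B (x j)⟫ = ∫ z in B, f i j z ∂μ) (z : Ω) :
    (Matrix.of fun i j => f i j z).PosSemidef := by
  refine ⟨Matrix.IsHermitian.ext fun i j => ?_, fun c => ?_⟩
  · have conj_integrable : Integrable (fun z => conj (f j i z)) μ :=
      (Complex.conjLIE.integrable_comp_iff).2 (hfμ j i)
    have ae_eq : (fun z => conj (f j i z)) =ᵐ[μ] f i j := by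
      refine conj_integrable.ae_eq_of_forall_setIntegral_eq _ _ (hfμ i j) fun B hB _ => ?_
      rw [integral_conj, ← h j i B hB, ← h i j B hB, inner_conj_symm]
      exact (M.isPositive B hB).isSymmetric _ _
    exact congrFun (((Complex.continuous_conj.comp (hf j i)).ae_eq_iff_eq μ (hf i j)).1 ae_eq) z
  · refine nonneg_of_forall_setIntegral_nonneg (μ := μ)
      (f := fun z => ∑ i ∈ c.support, ∑ j ∈ c.support, star (c i) * f i j z * c j)
      (by fun_prop) ?_ (fun B hB => ?_) z
    · exact integrable_finsetSum _ fun i _ => integrable_finsetSum _ fun j _ =>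
        ((hfμ i j).const_mul _).mul_const _
    · rw [← inner_sum_smul_eq_setIntegral hfμ h c.support c hB]
      exact (M.isPositive B hB).inner_nonneg_right _

end ContinuousDensity

end POVM

section Character

variable {G : Type*} [Group G] [MeasurableSpace G] {χ : G →* Circle}

section Averaging

variable (μ : Measure G) (σ : Measure G) {B : Set G}

theorem integral_indicator_inv_mul [MeasurableMul G] (hB : MeasurableSet B) (z : G) :
    ∫ y, B.indicator (fun _ => (1 : ℂ)) (z⁻¹ * y) ∂σ = σ.real ((fun v => z * v) '' B) := by
  have measurableSet_preimage := measurable_const_mul z⁻¹ hB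
  rw [image_mul_left]
  refine (integral_indicator_const (1 : ℂ) measurableSet_preimage).trans ?_
  rw [Complex.real_smul, mul_one]

theorem integral_conj_character_mul_indicator_inv_mul [MeasurableMul G] [MeasurableInv G]
    [μ.IsMulLeftInvariant] [μ.IsInvInvariant] (hB : MeasurableSet B) (y : G) :
    ∫ z, conj (χ z : ℂ) * B.indicator (fun _ => 1) (z⁻¹ * y) ∂μ =
      conj (χ y : ℂ) * ∫ z in B, (χ z : ℂ) ∂μ := by
  rw [← integral_div_left_eq_self _ μ y, ← integral_indicator hB, ← integral_const_mul]
  congr 1 with z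
  by_cases hz : z ∈ B
  · simp [hz, div_eq_mul_inv, ← Circle.coe_inv_eq_conj]
  · simp [hz]

variable [MeasurableMul₂ G] [MeasurableInv G] [IsFiniteMeasure μ] [IsFiniteMeasure σ]

theorem integrable_prod_conj_character_mul_indicator (hχ : Measurable χ) (hB : MeasurableSet B) :
    Integrable (fun p : G × G => conj (χ p.1 : ℂ) * B.indicator (fun _ => 1) (p.1⁻¹ * p.2))
      (μ.prod σ) := by
  refine Integrable.of_bound (C := 1) (Measurable.aestronglyMeasurable ?_) (.of_forall fun p => ?_)
  · have measurable_conj : Measurable fun z => conj (χ z : ℂ) :=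
      (show Continuous fun z : Circle => conj (z : ℂ) by fun_prop).measurable.comp hχ
    exact (measurable_conj.comp measurable_fst).mul
      ((measurable_const.indicator hB).comp (measurable_fst.inv.mul measurable_snd))
  · rw [norm_mul, RCLike.norm_conj, Circle.norm_coe, one_mul]
    exact (norm_indicator_le_norm_self _ _).trans_eq norm_one

theorem integrable_conj_character_mul_real_image_mul_left (hχ : Measurable χ)
    (hB : MeasurableSet B) :
    Integrable (fun z => conj (χ z : ℂ) * σ.real ((fun v => z * v) '' B)) μ := by
  have h := (integrable_prod_conj_character_mul_indicator μ σ hχ hB).integral_prod_left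
  simpa only [integral_const_mul, integral_indicator_inv_mul σ hB] using h

theorem integral_conj_character_mul_real_image_mul_left [μ.IsMulLeftInvariant] [μ.IsInvInvariant]
    (hχ : Measurable χ) (hB : MeasurableSet B) :
    ∫ z, conj (χ z : ℂ) * σ.real ((fun v => z * v) '' B) ∂μ =
      (∫ y, conj (χ y : ℂ) ∂σ) * ∫ z in B, (χ z : ℂ) ∂μ := by
  have fubini := integral_integral_swap
    (f := fun z y => conj (χ z : ℂ) * B.indicator (fun _ => 1) (z⁻¹ * y))
    (integrable_prod_conj_character_mul_indicator μ σ hχ hB)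
  simpa only [integral_const_mul, integral_indicator_inv_mul σ hB,
    integral_conj_character_mul_indicator_inv_mul μ hB, integral_mul_const] using fubini

end Averaging

theorem POVM.exists_inner_eq_mul_setIntegral_of_covariant [MeasurableMul₂ G]
    [MeasurableInv G] (μ : Measure G) [IsProbabilityMeasure μ] [μ.IsMulLeftInvariant]
    [μ.IsInvInvariant] {H : Type*} [NormedAddCommGroup H] [InnerProductSpace ℂ H] [CompleteSpace H]
    (M : POVM G H) (hχ : Measurable χ) {x y : H}
    (h : ∀ z B, MeasurableSet B →
      ⟪x, M.toFun ((fun v => z * v) '' B) y⟫ = χ z * ⟪x, M.toFun B y⟫) :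
    ∃ C : ℂ, ∀ B, MeasurableSet B → ⟪x, M.toFun B y⟫ = C * ∫ z in B, (χ z : ℂ) ∂μ := by
  obtain ⟨v, c, inner_eq⟩ := M.exists_inner_eq_sum_diagMeasure x y
  let σ (i : Fin 4) := M.diagMeasure (v i)
  refine ⟨∑ i, c i * ∫ z, conj (χ z : ℂ) ∂σ i, fun B hB => ?_⟩
  have measurableSet_image (z : G) : MeasurableSet ((fun v => z * v) '' B) := by
    rw [image_mul_left]
    exact measurable_const_mul z⁻¹ hB
  have untwist (z : G) : ⟪x, M.toFun B y⟫ =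
      ∑ i, c i * (conj (χ z : ℂ) * (σ i).real ((fun v => z * v) '' B)) := by
    have conj_mul_self : conj (χ z : ℂ) * χ z = 1 := by
      rw [← Circle.coe_inv_eq_conj, ← Circle.coe_mul, inv_mul_cancel, Circle.coe_one]
    simp only [mul_left_comm (c _), ← Finset.mul_sum]
    rw [← inner_eq _ (measurableSet_image z), h z B hB, ← mul_assoc, conj_mul_self, one_mul]
  calc ⟪x, M.toFun B y⟫
      = ∫ _, ⟪x, M.toFun B y⟫ ∂μ := by simp
    _ = ∫ z, ∑ i, c i * (conj (χ z : ℂ) * (σ i).real ((fun v => z * v) '' B)) ∂μ :=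
        integral_congr_ae (.of_forall untwist)
    _ = ∑ i, c i * ((∫ z, conj (χ z : ℂ) ∂σ i) * ∫ z in B, (χ z : ℂ) ∂μ) := by
        rw [integral_finsetSum _ fun i _ =>
          (integrable_conj_character_mul_real_image_mul_left μ (σ i) hχ hB).const_mul (c i)]
        simp only [integral_const_mul, integral_conj_character_mul_real_image_mul_left μ _ hχ hB]
    _ = (∑ i, c i * ∫ z, conj (χ z : ℂ) ∂σ i) * ∫ z in B, (χ z : ℂ) ∂μ := by
        simp only [← mul_assoc, Finset.sum_mul]

theorem eq_smul_of_ae_eq_comp_mul_right [MeasurableMul G] {μ : Measure G} [μ.IsMulRightInvariant]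
    {p : ENNReal} {φ ψ : Lp ℂ p μ} {u : G} (hφ : φ =ᵐ[μ] fun v => conj (χ v : ℂ))
    (hψ : ψ =ᵐ[μ] fun v => φ (v * u⁻¹)) : ψ = (χ u : ℂ) • φ := by
  have hφ_translate :=
    (measurePreserving_mul_right μ u⁻¹).quasiMeasurePreserving.ae_eq_comp hφ
  refine Lp.ext ?_
  filter_upwards [hφ, hψ, hφ_translate, Lp.coeFn_smul (χ u : ℂ) φ] with v hφv hψv htrans hsmul
  rw [hψv, hsmul, Pi.smul_apply, hφv]
  refine htrans.trans ?_
  simp [← Circle.coe_inv_eq_conj]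

theorem norm_eq_one_of_ae_eq_conj_character {μ : Measure G} [IsProbabilityMeasure μ] {p : ENNReal}
    (hp : p ≠ 0) {φ : Lp ℂ p μ} (hφ : φ =ᵐ[μ] fun v => conj (χ v : ℂ)) : ‖φ‖ = 1 := by
  have norm_eq : ∀ᵐ v ∂μ, ‖φ v‖ = ‖(1 : ℂ)‖ := hφ.mono fun v hv => by
    rw [hv, RCLike.norm_conj, Circle.norm_coe, norm_one]
  rw [Lp.norm_def, eLpNorm_congr_norm_ae norm_eq,
    eLpNorm_const _ hp (IsProbabilityMeasure.ne_zero μ)]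
  simp

end Character

section Torus

variable {n : ℕ}

theorem torusChar_one (m : Fin n → ℤ) : torusChar 1 m = 1 := by
  simp [torusChar]

theorem torusChar_mul (z w : Fin n → Circle) (m : Fin n → ℤ) :
    torusChar (z * w) m = torusChar z m * torusChar w m := by
  simp [torusChar, mul_zpow, Finset.prod_mul_distrib]

theorem norm_torusChar (z : Fin n → Circle) (m : Fin n → ℤ) : ‖torusChar z m‖ = 1 := by
  rw [torusChar, norm_prod]
  exact Finset.prod_eq_one fun i _ => by rw [norm_zpow, Circle.norm_coe, one_zpow]

theorem torusChar_ne_zero (z : Fin n → Circle) (m : Fin n → ℤ) : torusChar z m ≠ 0 :=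
  norm_ne_zero_iff.1 ((norm_torusChar z m).trans_ne one_ne_zero)

theorem conj_torusChar (z : Fin n → Circle) (m : Fin n → ℤ) :
    conj (torusChar z m) = (torusChar z m)⁻¹ :=
  (Complex.inv_eq_conj (norm_torusChar z m)).symm

theorem torusChar_zero (z : Fin n → Circle) : torusChar z 0 = 1 := by
  simp [torusChar]

theorem torusChar_sub (z : Fin n → Circle) (m k : Fin n → ℤ) :
    torusChar z (m - k) = torusChar z m / torusChar z k := by
  simp [torusChar, zpow_sub₀, Finset.prod_div_distrib]

theorem torusChar_add (z : Fin n → Circle) (m k : Fin n → ℤ) :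
    torusChar z (m + k) = torusChar z m * torusChar z k := by
  simp [torusChar, zpow_add₀, Finset.prod_mul_distrib]

theorem continuous_torusChar (m : Fin n → ℤ) :
    Continuous fun z : Fin n → Circle => torusChar z m :=
  continuous_finsetProd _ fun i _ =>
    (continuous_subtype_val.comp (continuous_apply i)).zpow₀ (m i)
      fun z => .inl (Circle.coe_ne_zero (z i))

theorem exists_torusChar_ne_one {m : Fin n → ℤ} (hm : m ≠ 0) :
    ∃ z : Fin n → Circle, torusChar z m ≠ 1 := by
  obtain ⟨i, hi⟩ := Function.ne_iff.1 hm
  have hmi : (m i : ℂ) ≠ 0 := Int.cast_ne_zero.2 hi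
  have eq_neg_one : torusChar (Pi.mulSingle i (Circle.exp (Real.pi / m i))) m = -1 := by
    rw [torusChar, Finset.prod_eq_single i (fun k _ hk => by simp [Pi.mulSingle_eq_of_ne hk])
      (by simp), Pi.mulSingle_eq_same, Circle.coe_exp, ← Complex.exp_int_mul,
      ← Complex.exp_pi_mul_I]
    congr 1
    push_cast
    field_simp
  exact ⟨_, eq_neg_one.trans_ne (by norm_num)⟩

/-- The character `z ↦ ⟨z, m⟩` of the torus as a homomorphism into the circle group. -/
noncomputable def torusCharHom (m : Fin n → ℤ) : (Fin n → Circle) →* Circle where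
  toFun z := ⟨torusChar z m, mem_sphere_zero_iff_norm.2 (norm_torusChar z m)⟩
  map_one' := Subtype.ext (torusChar_one m)
  map_mul' z w := Subtype.ext (torusChar_mul z w m)

theorem coe_torusCharHom (m : Fin n → ℤ) (z : Fin n → Circle) :
    (torusCharHom m z : ℂ) = torusChar z m :=
  rfl

theorem measurable_torusCharHom (m : Fin n → ℤ) : Measurable (torusCharHom m) :=
  have continuous_hom : Continuous (torusCharHom m) :=
    continuous_induced_rng.2 (continuous_torusChar m)
  continuous_hom.measurable

end Torus

section PositionDifference

variable {n : ℕ} {H : Type*} [NormedAddCommGroup H] [InnerProductSpace ℂ H] [CompleteSpace H]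

/-- `M` is a covariant position difference observable for the representation `U` of `𝕋ⁿ × 𝕋ⁿ`:
`U(w, z) M(B) U(w, z)* = M(z w⁻¹ B)`, written in matrix elements so that no adjoint of `U(w, z)`
occurs. -/
def POVM.IsPositionDifference (M : POVM (Fin n → Circle) H)
    (U : (Fin n → Circle) × (Fin n → Circle) → H ≃ₗᵢ[ℂ] H) : Prop :=
  ∀ w z : Fin n → Circle, ∀ B : Set (Fin n → Circle), MeasurableSet B → ∀ φ ψ : H,
    ⟪U (w, z) φ, M.toFun ((fun v => z * w⁻¹ * v) '' B) (U (w, z) ψ)⟫ = ⟪φ, M.toFun B ψ⟫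

namespace POVM.IsPositionDifference

variable {M : POVM (Fin n → Circle) H} {U : (Fin n → Circle) × (Fin n → Circle) → H ≃ₗᵢ[ℂ] H}
  {e : (Fin n → ℤ) × (Fin n → ℤ) → H} (hM : M.IsPositionDifference U)
  (hUe : ∀ u m, U u (e m) = (torusChar u.1 m.1 * torusChar u.2 m.2) • e m)

include hM hUe

theorem inner_image_mul_left (w z : Fin n → Circle) (p q : (Fin n → ℤ) × (Fin n → ℤ))
    {B : Set (Fin n → Circle)} (hB : MeasurableSet B) :
    ⟪e p, M.toFun ((fun v => z * w⁻¹ * v) '' B) (e q)⟫ =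
      torusChar w (p.1 - q.1) * torusChar z (p.2 - q.2) * ⟪e p, M.toFun B (e q)⟫ := by
  have ne_zero := torusChar_ne_zero (n := n)
  rw [← hM w z B hB, hUe, hUe, map_smul, inner_smul_left, inner_smul_right]
  simp only [torusChar_sub, map_mul, conj_torusChar]
  field_simp [ne_zero]

theorem inner_eq_zero {p q : (Fin n → ℤ) × (Fin n → ℤ)} (hpq : p.1 + p.2 ≠ q.1 + q.2)
    {B : Set (Fin n → Circle)} (hB : MeasurableSet B) : ⟪e p, M.toFun B (e q)⟫ = 0 := by
  have index_ne_zero : p.1 - q.1 + (p.2 - q.2) ≠ 0 := by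
    rw [← add_sub_add_comm]
    exact sub_ne_zero.2 hpq
  obtain ⟨z, hz⟩ := exists_torusChar_ne_one index_ne_zero
  have invariant := hM.inner_image_mul_left hUe z z p q hB
  simp only [mul_inv_cancel, one_mul, image_id'] at invariant
  rw [← torusChar_add] at invariant
  by_contra hne
  exact hz ((mul_eq_right₀ hne).1 invariant.symm)

variable (μ : Measure (Fin n → Circle)) [μ.IsHaarMeasure] [IsProbabilityMeasure μ]

theorem exists_inner_eq_mul_setIntegral (p q : (Fin n → ℤ) × (Fin n → ℤ)) :
    ∃ C : ℂ, ∀ B, MeasurableSet B →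
      ⟪e p, M.toFun B (e q)⟫ = C * ∫ z in B, torusChar z (p.2 - q.2) ∂μ := by
  refine M.exists_inner_eq_mul_setIntegral_of_covariant μ (measurable_torusCharHom (p.2 - q.2))
    fun z B hB => ?_
  simpa only [coe_torusCharHom, inv_one, mul_one, torusChar_one, one_mul]
    using hM.inner_image_mul_left hUe 1 z p q hB

theorem exists_ell2_inner_eq_inner_mul_setIntegral (j : Fin n → ℤ) :
    ∃ η : (Fin n → ℤ) → ell2, ∀ k l B, MeasurableSet B →
      ⟪e (j - k, k), M.toFun B (e (j - l, l))⟫ =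
        ⟪η k, η l⟫ * ∫ z in B, torusChar z (k - l) ∂μ := by
  choose K hK using fun k l : Fin n → ℤ =>
    hM.exists_inner_eq_mul_setIntegral hUe μ (j - k, k) (j - l, l)
  have density_continuous (k l : Fin n → ℤ) : Continuous fun z => K k l * torusChar z (k - l) :=
    (continuous_torusChar (k - l)).const_mul (K k l)
  have posSemidef : (Matrix.of K).PosSemidef := by
    have posSemidef_at_one := posSemidef_of_continuous_density (μ := μ) density_continuous
      (fun k l => (density_continuous k l).integrable_of_hasCompactSupport (.of_compactSpace _))
      (fun k l B hB => (hK k l B hB).trans (integral_const_mul _ _).symm) 1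
    simpa only [torusChar_one, mul_one] using posSemidef_at_one
  obtain ⟨η, hη⟩ := exists_ell2_inner_eq_of_posSemidef posSemidef
  exact ⟨η, fun k l B hB => by rw [hη]; exact hK k l B hB⟩

end POVM.IsPositionDifference

theorem stmt19_general (μ : Measure (Fin n → Circle)) [μ.IsHaarMeasure] [IsProbabilityMeasure μ]
    {e : (Fin n → ℤ) × (Fin n → ℤ) → H} (he : ∀ m, ‖e m‖ = 1)
    {U : (Fin n → Circle) × (Fin n → Circle) → H ≃ₗᵢ[ℂ] H}
    (hUe : ∀ u m, U u (e m) = (torusChar u.1 m.1 * torusChar u.2 m.2) • e m)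
    {M : POVM (Fin n → Circle) H} (hM : M.IsPositionDifference U) :
    ∃ ξ : (Fin n → ℤ) × (Fin n → ℤ) → ell2,
      (∀ kl, ‖ξ kl‖ = 1) ∧
      (∀ j k l : Fin n → ℤ, ∀ B : Set (Fin n → Circle), MeasurableSet B →
        ⟪e (j - k, k), M.toFun B (e (j - l, l))⟫
          = ⟪ξ (j - k, k), ξ (j - l, l)⟫ * ∫ z in B, torusChar z (k - l) ∂μ) ∧
      (∀ a b c d : Fin n → ℤ, a + b ≠ c + d → ∀ B : Set (Fin n → Circle), MeasurableSet B →
        ⟪e (a, b), M.toFun B (e (c, d))⟫ = 0) := by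
  choose η hη using hM.exists_ell2_inner_eq_inner_mul_setIntegral hUe μ
  refine ⟨fun p => η (p.1 + p.2) p.2, fun p => ?_, fun j k l B hB => ?_,
    fun a b c d hne B hB => hM.inner_eq_zero hUe hne hB⟩
  · have norm_sq_eq := hη (p.1 + p.2) p.2 p.2 univ .univ
    simp only [add_sub_cancel_right, Prod.mk.eta, M.normalized, one_apply_eq_self,
      inner_self_eq_norm_sq_to_K, he, Complex.coe_algebraMap, Complex.ofReal_one, one_pow,
      Measure.restrict_univ, sub_self, torusChar_zero, integral_const, probReal_univ, one_smul,
      mul_one] at norm_sq_eq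
    have norm_sq : ‖η (p.1 + p.2) p.2‖ ^ 2 = 1 := mod_cast norm_sq_eq.symm
    exact (pow_eq_one_iff_of_nonneg (norm_nonneg _) two_ne_zero).1 norm_sq
  · simpa only [sub_add_cancel] using hη j k l B hB

end PositionDifference

theorem stmt19 (n : ℕ) (hn : 1 ≤ n)
    -- normalized Haar measures on `𝕋ⁿ` and on `𝕋²ⁿ = 𝕋ⁿ × 𝕋ⁿ`
    (μn : Measure (Fin n → Circle)) (hμn : μn.IsHaarMeasure) (hμnP : IsProbabilityMeasure μn)
    (μ2n : Measure ((Fin n → Circle) × (Fin n → Circle)))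
    (hμ2n : μ2n.IsHaarMeasure) (hμ2nP : IsProbabilityMeasure μ2n)
    -- the orthonormal basis `e_m(u) = conj ⟨u, m⟩` of `L²(𝕋²ⁿ, μ₂ₙ)`
    (e : (Fin n → ℤ) × (Fin n → ℤ) → Lp ℂ 2 μ2n)
    (he : ∀ m : (Fin n → ℤ) × (Fin n → ℤ),
      (e m : ((Fin n → Circle) × (Fin n → Circle)) → ℂ) =ᵐ[μ2n]
        fun u => (starRingEnd ℂ) (torusChar u.1 m.1 * torusChar u.2 m.2))
    -- the representation `(U(u)φ)(v) = φ(v · conj u)` of `𝕋²ⁿ`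
    (U : ((Fin n → Circle) × (Fin n → Circle)) → (Lp ℂ 2 μ2n ≃ₗᵢ[ℂ] Lp ℂ 2 μ2n))
    (hU : ∀ u : (Fin n → Circle) × (Fin n → Circle), ∀ φ : Lp ℂ 2 μ2n,
      (U u φ : ((Fin n → Circle) × (Fin n → Circle)) → ℂ) =ᵐ[μ2n]
        fun v => φ (v * u⁻¹))
    -- `M` is a covariant position difference observable
    (M : POVM (Fin n → Circle) (Lp ℂ 2 μ2n))
    (hMcov : ∀ w z : Fin n → Circle, ∀ B : Set (Fin n → Circle), MeasurableSet B →
      ∀ φ ψ : Lp ℂ 2 μ2n,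
        ⟪(U (w, z) φ : Lp ℂ 2 μ2n),
            M.toFun ((fun v => z * w⁻¹ * v) '' B) (U (w, z) ψ)⟫
          = ⟪φ, M.toFun B ψ⟫) :
    ∃ ξ : (Fin n → ℤ) × (Fin n → ℤ) → ell2,
      (∀ kl : (Fin n → ℤ) × (Fin n → ℤ), ‖ξ kl‖ = 1) ∧
      (∀ j k l : Fin n → ℤ, ∀ B : Set (Fin n → Circle), MeasurableSet B →
        ⟪e (j - k, k), M.toFun B (e (j - l, l))⟫
          = ⟪ξ (j - k, k), ξ (j - l, l)⟫ * ∫ z in B, torusChar z (k - l) ∂μn) ∧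
      (∀ a b c d : Fin n → ℤ, a + b ≠ c + d →
        ∀ B : Set (Fin n → Circle), MeasurableSet B →
          ⟪e (a, b), M.toFun B (e (c, d))⟫ = 0) := by
  let χ (m : (Fin n → ℤ) × (Fin n → ℤ)) := (torusCharHom m.1).coprod (torusCharHom m.2)
  exact stmt19_general μn
    (fun m => norm_eq_one_of_ae_eq_conj_character (χ := χ m) two_ne_zero (he m))
    (fun u m => eq_smul_of_ae_eq_comp_mul_right (χ := χ m) (he m) (hU u (e m))) hMcov
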